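/- Fix t1, t2 > 0, set m = min(t1, t2), t* = 1/m, and for N > 1 and τ ∈ (0, 2] set λ̃(N, τ) = N^{-τ}·m·(t1 - N^{-τ}·m)/t1. Then the limit as N → ∞ of (1/(N·t*)) · ∫_{[0, N t*]²} dx1 dx2 ∫_0^2 dτ · p_{2N^τ/m - 1/t1 - 1/t2}(x2 - x1) · ∫_ℝ p_1(z) · min(1, |z·(λ̃(N,τ))^{1/2} - N^{-τ}·m·(x2 - x1)|^{1/2}) dz equals 0. -/

import Mathlib

open MeasureTheory Real Filter

/-- The heat kernel `p_t(x) = (2πt)^{-1/2} exp(-x²/(2t))`. -/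
noncomputable def heatKernel (t x : ℝ) : ℝ :=
  Real.exp (-x ^ 2 / (2 * t)) / Real.sqrt (2 * Real.pi * t)

lemma hk_eq {v : ℝ} (hv : 0 < v) (x : ℝ) :
    heatKernel v x = ProbabilityTheory.gaussianPDFReal 0 v.toNNReal x := by
  simp [heatKernel, ProbabilityTheory.gaussianPDFReal, Real.coe_toNNReal v hv.le, div_eq_inv_mul]

lemma hk_nonneg (v x : ℝ) : 0 ≤ heatKernel v x := by
  unfold heatKernel; positivity

lemma hk_int {v : ℝ} (hv : 0 < v) :
    Integrable (heatKernel v) ∧ ∫ x, heatKernel v x = 1 := by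
  have h : heatKernel v = ProbabilityTheory.gaussianPDFReal 0 v.toNNReal := by
    ext x; exact hk_eq hv x
  have hv' : v.toNNReal ≠ 0 := by simpa using hv
  rw [h]
  exact ⟨ProbabilityTheory.integrable_gaussianPDFReal _ _,
    ProbabilityTheory.integral_gaussianPDFReal_eq_one _ hv'⟩

lemma hk_sq {v : ℝ} (hv : 0 < v) :
    Integrable (fun x => heatKernel v x * x ^ 2) ∧ ∫ x, heatKernel v x * x ^ 2 = v := by
  have hv' : v.toNNReal ≠ 0 := by simpa using hv
  have key : ∫ x, heatKernel v x * x ^ 2 = v := by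
    have h1 := ProbabilityTheory.variance_fun_id_gaussianReal (μ := 0) (v := v.toNNReal)
    rw [ProbabilityTheory.variance_of_integral_eq_zero (by fun_prop)
      ProbabilityTheory.integral_id_gaussianReal,
      ProbabilityTheory.integral_gaussianReal_eq_integral_smul hv',
      Real.coe_toNNReal v hv.le] at h1
    refine Eq.trans ?_ h1
    congr 1
    ext x
    simp [hk_eq hv]
  refine ⟨?_, key⟩
  by_contra hn
  rw [integral_undef hn] at key
  exact hv.ne key

lemma hk_quad {v : ℝ} (hv : 0 < v) (A B : ℝ) :
    Integrable (fun x => heatKernel v x * (A + B * x ^ 2)) ∧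
      ∫ x, heatKernel v x * (A + B * x ^ 2) = A + B * v := by
  have e : (fun x => heatKernel v x * (A + B * x ^ 2)) =
      fun x => A * heatKernel v x + B * (heatKernel v x * x ^ 2) := by
    ext x; ring
  rw [e]
  have i1 := (hk_int hv).1.const_mul A
  have i2 := (hk_sq hv).1.const_mul B
  refine ⟨i1.add i2, ?_⟩
  rw [integral_add i1 i2, integral_const_mul, integral_const_mul, (hk_int hv).2, (hk_sq hv).2]
  ring

lemma min_bound (w r : ℝ) (hr : 0 < r) :
    min 1 (|w| ^ ((1:ℝ)/2)) ≤ r + w ^ 2 / r ^ 4 := by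
  rw [← Real.sqrt_eq_rpow]
  by_cases h : √|w| ≤ r
  · have : 0 ≤ w ^ 2 / r ^ 4 := by positivity
    exact (min_le_right _ _).trans (by linarith)
  · push Not at h
    have h4 : r ^ 4 ≤ w ^ 2 := by
      have h2 : r ^ 2 ≤ |w| := by
        have := pow_le_pow_left₀ hr.le h.le 2
        rwa [Real.sq_sqrt (abs_nonneg w)] at this
      have := pow_le_pow_left₀ (by positivity) h2 2
      rw [sq_abs] at this
      calc r ^ 4 = (r ^ 2) ^ 2 := by ring
        _ ≤ _ := this
    have : 1 ≤ w ^ 2 / r ^ 4 := by rwa [one_le_div (by positivity)]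
    exact (min_le_left _ _).trans (by linarith)

lemma z_bound (a b r : ℝ) (ha : 0 ≤ a) (hr : 0 < r) :
    ∫ z : ℝ, heatKernel 1 z * min 1 (|z * a ^ ((1:ℝ)/2) - b| ^ ((1:ℝ)/2)) ≤
      r + 2 * (a + b ^ 2) / r ^ 4 := by
  obtain ⟨hi, he⟩ := hk_quad one_pos (r + 2 * b ^ 2 / r ^ 4) (2 * a / r ^ 4)
  have : r + 2 * (a + b ^ 2) / r ^ 4 = (r + 2 * b ^ 2 / r ^ 4) + (2 * a / r ^ 4) * 1 := by ring
  rw [this, ← he]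
  refine integral_mono_of_nonneg (ae_of_all _ fun z => ?_) hi (ae_of_all _ fun z => ?_)
  · exact mul_nonneg (hk_nonneg _ _) (by positivity)
  · refine mul_le_mul_of_nonneg_left ?_ (hk_nonneg _ _)
    refine (min_bound _ r hr).trans ?_
    rw [← Real.sqrt_eq_rpow]
    have hs := Real.sq_sqrt ha
    have : (z * √a - b) ^ 2 ≤ 2 * (a * z ^ 2) + 2 * b ^ 2 := by
      nlinarith [sq_nonneg (z * √a + b)]
    have := div_le_div_of_nonneg_right this (by positivity : 0 ≤ r ^ 4)
    calc _ ≤ r + (2 * (a * z ^ 2) + 2 * b ^ 2) / r ^ 4 := by linarith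
      _ = _ := by ring

lemma exp_lint (k : ℝ) (hk : 0 < k) :
    ∫⁻ τ in Set.Ioc (0:ℝ) 2, ENNReal.ofReal (Real.exp (-k * τ)) ≤ ENNReal.ofReal (1 / k) := by
  calc _ ≤ ∫⁻ τ in Set.Ioi (0:ℝ), ENNReal.ofReal (Real.exp (-k * τ)) :=
        lintegral_mono_set Set.Ioc_subset_Ioi_self
    _ = _ := by
        rw [← ofReal_integral_eq_lintegral_ofReal (integrableOn_exp_mul_Ioi (by linarith) _)
          (ae_of_all _ fun x => (Real.exp_pos _).le), integral_exp_mul_Ioi (by linarith)]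
        simp

/-- the explicit majorant after integrating in `z` -/
noncomputable def maj (t1 t2 m N τ y : ℝ) : ℝ :=
  heatKernel (2 * N ^ τ / m - 1 / t1 - 1 / t2) y *
    ((N ^ (-τ / 8) + 2 * (N ^ (-τ) * m) / (N ^ (-τ / 8)) ^ 4) +
      2 * (N ^ (-τ) * m) ^ 2 / (N ^ (-τ / 8)) ^ 4 * y ^ 2)

lemma maj_meas (t1 t2 m N : ℝ) (hN : 1 < N) :
    Measurable fun p : ℝ × ℝ => maj t1 t2 m N p.1 p.2 := by
  have h0 : 0 < N := by linarith
  unfold maj heatKernel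
  simp only [Real.rpow_def_of_pos h0]
  fun_prop

lemma s_pos {t1 t2 m N τ : ℝ} (ht1 : 0 < t1) (ht2 : 0 < t2) (hm : m = min t1 t2)
    (hN : 1 < N) (hτ : 0 < τ) : 0 < 2 * N ^ τ / m - 1 / t1 - 1 / t2 := by
  have hm0 : 0 < m := by rw [hm]; exact lt_min ht1 ht2
  have h1 : 1 / t1 ≤ 1 / m := one_div_le_one_div_of_le hm0 (by rw [hm]; exact min_le_left _ _)
  have h2 : 1 / t2 ≤ 1 / m := one_div_le_one_div_of_le hm0 (by rw [hm]; exact min_le_right _ _)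
  have h3 : 1 < N ^ τ := Real.one_lt_rpow hN hτ
  have h4 : 2 * 1 / m < 2 * N ^ τ / m := by gcongr
  have : 2 * 1 / m = 1 / m + 1 / m := by ring
  linarith

lemma r_facts {N τ : ℝ} (hN : 1 < N) (hτ : 0 < τ) :
    0 < N ^ (-τ / 8) ∧ N ^ (-τ / 8) ≤ 1 ∧ N ^ (-τ) = (N ^ (-τ / 8)) ^ 8 := by
  have h0 : 0 < N := by linarith
  refine ⟨Real.rpow_pos_of_pos h0 _,
    Real.rpow_le_one_of_one_le_of_nonpos hN.le (by linarith), ?_⟩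
  rw [← Real.rpow_natCast, ← Real.rpow_mul h0.le]
  congr 1
  push_cast
  ring

lemma maj_lint {t1 t2 m N τ : ℝ} (ht1 : 0 < t1) (ht2 : 0 < t2) (hm : m = min t1 t2)
    (hN : 1 < N) (hτ : 0 < τ) :
    ∫⁻ y, ENNReal.ofReal (maj t1 t2 m N τ y) ≤
      ENNReal.ofReal (1 + 6 * m) * ENNReal.ofReal (Real.exp (-(Real.log N / 8) * τ)) := by
  have hm0 : 0 < m := by rw [hm]; exact lt_min ht1 ht2
  have h0 : 0 < N := by linarith
  have hs := s_pos ht1 ht2 hm hN hτ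
  have hsle : 2 * N ^ τ / m - 1 / t1 - 1 / t2 ≤ 2 / (N ^ (-τ) * m) := by
    have : 2 / (N ^ (-τ) * m) = 2 * N ^ τ / m := by
      rw [Real.rpow_neg h0.le]
      have := (Real.rpow_pos_of_pos h0 τ).ne'
      field_simp
    rw [this]
    have : 0 < 1 / t1 := by positivity
    have : 0 < 1 / t2 := by positivity
    linarith
  have he : Real.exp (-(Real.log N / 8) * τ) = N ^ (-τ / 8) := by
    rw [Real.rpow_def_of_pos h0]; congr 1; ring
  obtain ⟨hr0, hr1, hq⟩ := r_facts hN hτ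
  unfold maj
  rw [← ENNReal.ofReal_mul (by positivity), he]
  rw [hq] at hsle ⊢
  generalize N ^ (-τ / 8) = r at *
  generalize 2 * N ^ τ / m - 1 / t1 - 1 / t2 = s at *
  obtain ⟨hi, hv⟩ := hk_quad hs (r + 2 * (r ^ 8 * m) / r ^ 4) (2 * (r ^ 8 * m) ^ 2 / r ^ 4)
  rw [← ofReal_integral_eq_lintegral_ofReal hi
    (ae_of_all _ fun y => mul_nonneg (hk_nonneg _ _) (by positivity)), hv]
  apply ENNReal.ofReal_le_ofReal
  have h1 : 2 * (r ^ 8 * m) ^ 2 / r ^ 4 * s ≤ 2 * (r ^ 8 * m) ^ 2 / r ^ 4 * (2 / (r ^ 8 * m)) := by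
    gcongr
  have h2 : 2 * (r ^ 8 * m) ^ 2 / r ^ 4 * (2 / (r ^ 8 * m)) = 4 * m * r ^ 4 := by
    field_simp; ring
  have h3 : 2 * (r ^ 8 * m) / r ^ 4 = 2 * m * r ^ 4 := by field_simp
  have h4 : r ^ 4 ≤ r := by
    simpa using pow_le_pow_of_le_one hr0.le hr1 (show 1 ≤ 4 by norm_num)
  have h5 : m * r ^ 4 ≤ m * r := by gcongr
  rw [h3]
  nlinarith

lemma integrand_bound {t1 t2 m N τ y : ℝ} (ht1 : 0 < t1) (ht2 : 0 < t2) (hm : m = min t1 t2)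
    (hN : 1 < N) (hτ : 0 < τ) :
    ‖heatKernel (2 * N ^ τ / m - 1 / t1 - 1 / t2) y *
            ∫ z : ℝ, heatKernel 1 z *
              min 1 (|z * (N ^ (-τ) * m * (t1 - N ^ (-τ) * m) / t1) ^ ((1:ℝ)/2)
                  - N ^ (-τ) * m * y| ^ ((1:ℝ)/2))‖ₑ ≤ ENNReal.ofReal (maj t1 t2 m N τ y) := by
  have hm0 : 0 < m := by rw [hm]; exact lt_min ht1 ht2
  have hmt : m ≤ t1 := by rw [hm]; exact min_le_left _ _
  obtain ⟨hr0, hr1, hq⟩ := r_facts hN hτ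
  have hq0 : 0 < N ^ (-τ) := by rw [hq]; positivity
  have hq1 : N ^ (-τ) ≤ 1 := by rw [hq]; exact pow_le_one₀ hr0.le hr1
  have hqm : N ^ (-τ) * m ≤ t1 := by nlinarith
  rw [Real.enorm_eq_ofReal (mul_nonneg (hk_nonneg _ _) (integral_nonneg fun z =>
    mul_nonneg (hk_nonneg _ _) (by positivity)))]
  apply ENNReal.ofReal_le_ofReal
  unfold maj
  refine mul_le_mul_of_nonneg_left ?_ (hk_nonneg _ _)
  have hl0 : 0 ≤ N ^ (-τ) * m * (t1 - N ^ (-τ) * m) / t1 :=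
    div_nonneg (mul_nonneg (by positivity) (by linarith)) ht1.le
  have hl1 : N ^ (-τ) * m * (t1 - N ^ (-τ) * m) / t1 ≤ N ^ (-τ) * m := by
    rw [div_le_iff₀ ht1]
    have : 0 < N ^ (-τ) * m := by positivity
    nlinarith
  refine (z_bound _ _ _ hl0 hr0).trans ?_
  generalize N ^ (-τ) * m * (t1 - N ^ (-τ) * m) / t1 = l at *
  calc _ ≤ N ^ (-τ / 8) + 2 * (N ^ (-τ) * m + (N ^ (-τ) * m * y) ^ 2) / (N ^ (-τ / 8)) ^ 4 := by
        gcongr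
    _ = _ := by ring

lemma total_bound {t1 t2 m N L : ℝ} (ht1 : 0 < t1) (ht2 : 0 < t2) (hm : m = min t1 t2)
    (hN : 1 < N) (hL : 0 < L) :
    ‖∫ x1 in (0:ℝ)..L, ∫ x2 in (0:ℝ)..L, ∫ τ in (0:ℝ)..2,
          heatKernel (2 * N ^ τ / m - 1 / t1 - 1 / t2) (x2 - x1) *
            ∫ z : ℝ, heatKernel 1 z *
              min 1 (|z * (N ^ (-τ) * m * (t1 - N ^ (-τ) * m) / t1) ^ ((1:ℝ)/2)
                  - N ^ (-τ) * m * (x2 - x1)| ^ ((1:ℝ)/2))‖ₑ ≤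
      ENNReal.ofReal ((1 + 6 * m) * (8 / Real.log N) * L) := by
  have hm0 : 0 < m := by rw [hm]; exact lt_min ht1 ht2
  have hlog := Real.log_pos hN
  simp only [intervalIntegral.integral_of_le hL.le,
    intervalIntegral.integral_of_le (zero_le_two : (0:ℝ) ≤ 2)]
  have inner : ∀ x1 : ℝ, ∫⁻ x2 in Set.Ioc 0 L, ∫⁻ τ in Set.Ioc (0:ℝ) 2,
      ENNReal.ofReal (maj t1 t2 m N τ (x2 - x1)) ≤
      ENNReal.ofReal ((1 + 6 * m) * (8 / Real.log N)) := by
    intro x1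
    rw [lintegral_lintegral_swap]
    · calc _ ≤ ∫⁻ τ in Set.Ioc (0:ℝ) 2, ENNReal.ofReal (1 + 6 * m) *
              ENNReal.ofReal (Real.exp (-(Real.log N / 8) * τ)) := by
            refine setLIntegral_mono' measurableSet_Ioc fun τ hτ => ?_
            refine (setLIntegral_le_lintegral _ _).trans ?_
            rw [lintegral_sub_right_eq_self (fun y => ENNReal.ofReal (maj t1 t2 m N τ y)) x1]
            exact maj_lint ht1 ht2 hm hN hτ.1
        _ ≤ _ := by
            rw [lintegral_const_mul _ (by fun_prop), ENNReal.ofReal_mul (by positivity)]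
            gcongr
            refine (exp_lint _ (by positivity)).trans (le_of_eq ?_)
            rw [one_div_div]
    · have hmz := maj_meas t1 t2 m N hN
      have : Measurable fun p : ℝ × ℝ => (p.2, p.1 - x1) := by fun_prop
      exact (ENNReal.measurable_ofReal.comp (hmz.comp this)).aemeasurable
  refine (enorm_integral_le_lintegral_enorm _).trans ?_
  calc _ ≤ ∫⁻ x1 in Set.Ioc 0 L, ENNReal.ofReal ((1 + 6 * m) * (8 / Real.log N)) := by
        refine lintegral_mono fun x1 => ?_
        refine (enorm_integral_le_lintegral_enorm _).trans ((lintegral_mono fun x2 => ?_).trans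
          (inner x1))
        refine (enorm_integral_le_lintegral_enorm _).trans ?_
        exact setLIntegral_mono' measurableSet_Ioc fun τ hτ => integrand_bound ht1 ht2 hm hN hτ.1
    _ = _ := by
        rw [setLIntegral_const, Real.volume_Ioc, sub_zero, ← ENNReal.ofReal_mul (by positivity)]

theorem stmt_18 (t1 t2 m tstar : ℝ) (ht1 : 0 < t1) (ht2 : 0 < t2)
    (hm : m = min t1 t2) (htstar : tstar = 1 / m) :
    Tendsto (fun N : ℝ =>
      (1 / (N * tstar)) *
        ∫ x1 in (0:ℝ)..(N * tstar), ∫ x2 in (0:ℝ)..(N * tstar), ∫ τ in (0:ℝ)..2,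
          heatKernel (2 * N ^ τ / m - 1 / t1 - 1 / t2) (x2 - x1) *
            ∫ z : ℝ, heatKernel 1 z *
              min 1 (|z * (N ^ (-τ) * m * (t1 - N ^ (-τ) * m) / t1) ^ ((1:ℝ)/2)
                  - N ^ (-τ) * m * (x2 - x1)| ^ ((1:ℝ)/2)))
      atTop (nhds 0) := by
  have hm0 : 0 < m := by rw [hm]; exact lt_min ht1 ht2
  have ht0 : 0 < tstar := by rw [htstar]; positivity
  have hlim : Tendsto (fun N : ℝ => (1 + 6 * m) * (8 / Real.log N)) atTop (nhds 0) := by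
    simpa using (Real.tendsto_log_atTop.const_div_atTop 8).const_mul (1 + 6 * m)
  refine squeeze_zero_norm' ?_ hlim
  filter_upwards [eventually_gt_atTop 1] with N hN
  have hL : 0 < N * tstar := by positivity
  have hlog := Real.log_pos hN
  have h := total_bound ht1 ht2 hm hN hL
  rw [← ofReal_norm, ENNReal.ofReal_le_ofReal_iff (by positivity)] at h
  rw [norm_mul, Real.norm_of_nonneg (by positivity), one_div, inv_mul_le_iff₀ hL]
  linarith
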